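/- Let G be a finite connected graph with nonnegative edge weights and let τ > 0. If G admits a bipartition of its vertex set into two nonempty parts with total crossing edge weight less than τ, then G admits such a bipartition (X, Y) with crossing weight less than τ in which, additionally, the induced subgraphs on X and on Y are both connected. Consequently, in the Tile Automata model, every τ-breakable assembly can be broken along a cut of strength less than τ into two pieces each of which is a connected assembly. -/

import Mathlib

namespace TA

/-- A positioned assembly: a finitely supported partial placement of tile states
on the square lattice `ℤ²`. -/
structure PosAsm (S : Type) where
  tiles : ℤ × ℤ → Option S
  finite : {x : ℤ × ℤ | tiles x ≠ none}.Finite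

/-- The domain (set of occupied positions) of a positioned assembly. -/
def dom {S : Type} (α : PosAsm S) : Set (ℤ × ℤ) := {x | α.tiles x ≠ none}

/-- A Tile Automata system `Γ = (Σ_Γ, Π, Λ, Δ, τ)` over an alphabet `S` of tile
states.  `aff s₁ s₂ true` is the affinity strength of `s₁` immediately to the west
of `s₂` (orientation `⊢`), `aff s₁ s₂ false` that of `s₁` immediately above `s₂`
(orientation `⊥`).  `rules` is the set of transition rules
`(s₁ᵃ, s₂ᵃ, s₁ᵇ, s₂ᵇ, d)`, `seeds` the set of initial assemblies and `τ` the
stability threshold. -/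
structure System (S : Type) where
  aff : S → S → Bool → ℕ
  rules : Set (S × S × S × S × Bool)
  seeds : Set (PosAsm S)
  τ : ℕ

variable {S : Type}

/-- The weight in the bond graph of `α` of the edge between positions `u` and `v`
(`0` unless both are occupied and adjacent). -/
def edgeW (Γ : System S) (α : PosAsm S) (u v : ℤ × ℤ) : ℕ :=
  match α.tiles u, α.tiles v with
  | some a, some b =>
    if v = u + (1, 0) then Γ.aff a b true
    else if u = v + (1, 0) then Γ.aff b a true
    else if u = v + (0, 1) then Γ.aff a b false
    else if v = u + (0, 1) then Γ.aff b a false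
    else 0
  | _, _ => 0

/-- The total strength of the bonds of `α` crossing from `A` to `B`. -/
noncomputable def crossW (Γ : System S) (α : PosAsm S) (A B : Set (ℤ × ℤ)) : ℕ :=
  ∑ᶠ u ∈ A, ∑ᶠ v ∈ B, edgeW Γ α u v

/-- `α` is `τ`-stable: every bipartition of its tiles has crossing bond strength
at least `τ` (its bond graph has min-cut at least `τ`). -/
def Stable (Γ : System S) (α : PosAsm S) : Prop :=
  ∀ X : Set (ℤ × ℤ), (dom α ∩ X).Nonempty → (dom α \ X).Nonempty →
    Γ.τ ≤ crossW Γ α X Xᶜ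

/-- The union of two positioned assemblies (used for disjoint domains). -/
def union (α β : PosAsm S) : PosAsm S where
  tiles x := match α.tiles x with
    | some a => some a
    | none => β.tiles x
  finite := by
    apply (α.finite.union β.finite).subset
    intro x hx
    simp only [Set.mem_setOf_eq, Set.mem_union]
    by_cases h : α.tiles x = none
    · right
      simp only [Set.mem_setOf_eq, h] at hx
      exact hx
    · exact Or.inl h

/-- Grid (edge) adjacency on `ℤ²`. -/
def gridAdj (u v : ℤ × ℤ) : Prop :=
  v - u ∈ ({(1, 0), (-1, 0), (0, 1), (0, -1)} : Finset (ℤ × ℤ))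

/-- A positioned assembly is connected (as required of assemblies). -/
def IsConnected (α : PosAsm S) : Prop :=
  ∀ u ∈ dom α, ∀ v ∈ dom α,
    Relation.ReflTransGen (fun x y => x ∈ dom α ∧ y ∈ dom α ∧ gridAdj x y) u v

/-- `α` and `β` are `τ`-combinable into `γ`: they have disjoint domains, `γ` is
their union, and they attach along a border of total affinity strength at least `τ`. -/
def Combines (Γ : System S) (α β γ : PosAsm S) : Prop :=
  Disjoint (dom α) (dom β) ∧ γ = union α β ∧
    Γ.τ ≤ crossW Γ γ (dom α) (dom β)

/-- `γ` is `τ`-breakable into the pieces `α` and `β`: it splits along a cut of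
total affinity strength less than `τ`. -/
def BreaksInto (Γ : System S) (γ α β : PosAsm S) : Prop :=
  Disjoint (dom α) (dom β) ∧ γ = union α β ∧
    (dom α).Nonempty ∧ (dom β).Nonempty ∧
    crossW Γ γ (dom α) (dom β) < Γ.τ

/-- `α` is transitionable into `β`: some adjacent pair of tiles matches a
transition rule, whose output states replace them. -/
def Transitions (Γ : System S) (α β : PosAsm S) : Prop :=
  ∃ (u v : ℤ × ℤ) (a b c d : S) (horiz : Bool),
    ((horiz = true ∧ v = u + (1, 0)) ∨ (horiz = false ∧ v = u + (0, -1))) ∧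
    α.tiles u = some a ∧ α.tiles v = some b ∧
    (a, b, c, d, horiz) ∈ Γ.rules ∧
    β.tiles = Function.update (Function.update α.tiles u (some c)) v (some d)

/-- Translation of a positioned assembly. -/
def translate (t : ℤ × ℤ) (α : PosAsm S) : PosAsm S where
  tiles x := α.tiles (x - t)
  finite := by
    apply (α.finite.image (fun y => y + t)).subset
    intro x hx
    exact ⟨x - t, hx, by ring⟩

/-- The producible assemblies of a Tile Automata system: generated from the
initial assemblies (closed under translation) by transitions, `τ`-combinations
and `τ`-breaks. -/
inductive Producible (Γ : System S) : PosAsm S → Prop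
  | seed {α : PosAsm S} : α ∈ Γ.seeds → Producible Γ α
  | translate {α : PosAsm S} (t : ℤ × ℤ) : Producible Γ α → Producible Γ (TA.translate t α)
  | transition {α β : PosAsm S} : Producible Γ α → Transitions Γ α β → Producible Γ β
  | combine {α β γ : PosAsm S} :
      Producible Γ α → Producible Γ β → Combines Γ α β γ → Producible Γ γ
  | breakL {γ α β : PosAsm S} : Producible Γ γ → BreaksInto Γ γ α β → Producible Γ α
  | breakR {γ α β : PosAsm S} : Producible Γ γ → BreaksInto Γ γ α β → Producible Γ β

/-- One step of `Γ`: a single transition, combination with a producible assembly,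
or break. -/
def Step (Γ : System S) (α β : PosAsm S) : Prop :=
  Transitions Γ α β ∨
    (∃ δ, Producible Γ δ ∧ (Combines Γ α δ β ∨ Combines Γ δ α β)) ∨
    (∃ δ, BreaksInto Γ α β δ ∨ BreaksInto Γ α δ β)

/-- `α →^Γ β`: `α` may become `β` through a sequence of combinations, transitions
and/or breaks. -/
def StepsTo (Γ : System S) : PosAsm S → PosAsm S → Prop :=
  Relation.ReflTransGen (Step Γ)

end TA



/-- The graph-theoretic claim: in a finite connected graph `G` with nonnegative
integer edge weights `w` (vanishing off the edges of `G`), if some bipartition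
of the vertex set into two nonempty parts has crossing weight less than `τ`,
then there is such a bipartition `(X, Xᶜ)` of crossing weight less than `τ` in
which the induced subgraphs on both `X` and `Xᶜ` are connected. -/
def BreakIntoConnectedPiecesGraphClaim : Prop :=
  ∀ (V : Type) [Fintype V] [DecidableEq V] (G : SimpleGraph V) (w : V → V → ℕ) (τ : ℕ),
    0 < τ → G.Connected →
    (∀ u v : V, w u v = w v u) →
    (∀ u v : V, ¬ G.Adj u v → w u v = 0) →
    (∃ X : Finset V, X.Nonempty ∧ Xᶜ.Nonempty ∧ ∑ u ∈ X, ∑ v ∈ Xᶜ, w u v < τ) →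
    ∃ X : Finset V, X.Nonempty ∧ Xᶜ.Nonempty ∧ (∑ u ∈ X, ∑ v ∈ Xᶜ, w u v < τ) ∧
      (G.induce (X : Set V)).Connected ∧ (G.induce ((Xᶜ : Finset V) : Set V)).Connected

/-- The consequence in the Tile Automata model: every `τ`-breakable (connected)
assembly can be broken along a cut of strength less than `τ` into two pieces,
each of which is a connected assembly. -/
def BreakIntoConnectedPiecesTAClaim : Prop :=
  ∀ (S : Type) (Γ : TA.System S), 0 < Γ.τ →
    ∀ γ : TA.PosAsm S, TA.IsConnected γ →
      (∃ α β : TA.PosAsm S, TA.BreaksInto Γ γ α β) →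
      ∃ α β : TA.PosAsm S, TA.BreaksInto Γ γ α β ∧
        TA.IsConnected α ∧ TA.IsConnected β

/-! Only edge boundaries matter. Let `C` be a connected component of `G[X]` and `D` a connected
component of `G[Cᶜ]`. An edge leaving `D` ends in `C`, so every vertex outside `D` reaches `C`
without entering `D`, and `Dᶜ` is connected along with `D`. Moreover an edge from `Dᶜ` to `D` starts
in `C ⊆ X`, and it ends outside `X` because `C` is closed under adjacency in `X`. So it already
crosses from `X` to `Xᶜ`, and the cut `(Dᶜ, D)` weighs at most as much as `(X, Xᶜ)`. -/

section ConnectedCut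

variable {V : Type*} {G : SimpleGraph V}

/-- The edge boundary of a vertex set, with its edges oriented outwards. -/
def edgeBoundary (G : SimpleGraph V) (X : Set V) : Set (V × V) :=
  {p | p.1 ∈ X ∧ p.2 ∉ X ∧ G.Adj p.1 p.2}

theorem exists_connected_adj_closed_subset {X : Set V} {a : V} (ha : a ∈ X) :
    ∃ C ⊆ X, a ∈ C ∧ (G.induce C).Connected ∧ ∀ u ∈ C, ∀ v ∈ X, G.Adj u v → v ∈ C := by
  let S : Set (Set V) := {s | s ⊆ X ∧ a ∈ s ∧ (G.induce s).Connected}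
  have singleton_mem : {a} ∈ S :=
    ⟨Set.singleton_subset_iff.2 ha, rfl, .of_subsingleton⟩
  refine ⟨⋃₀ S, Set.sUnion_subset fun s hs => hs.1, ⟨{a}, singleton_mem, rfl⟩, ?_, ?_⟩
  · exact SimpleGraph.induce_sUnion_connected_of_pairwise_not_disjoint ⟨{a}, singleton_mem⟩
      (fun hs ht => ⟨a, hs.2.1, ht.2.1⟩) (fun hs => hs.2.2)
  · rintro u ⟨s, ⟨hsX, has, hs⟩, hu⟩ v hv huv
    have union_connected : (G.induce (s ∪ {u, v})).Connected :=
      SimpleGraph.induce_union_connected hs.preconnected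
        (SimpleGraph.induce_pair_connected_of_adj huv).preconnected ⟨u, hu, .inl rfl⟩
    exact ⟨s ∪ {u, v}, ⟨Set.union_subset hsX (Set.pair_subset (hsX hu) hv), .inl has,
      union_connected⟩, .inr (.inr rfl)⟩

theorem connected_induce_compl_of_adj_closed (hG : G.Preconnected) {C D : Set V}
    (hC : (G.induce C).Connected) (hCD : C ⊆ Dᶜ)
    (hD : ∀ u ∈ D, ∀ v ∈ Cᶜ, G.Adj u v → v ∈ D) : (G.induce Dᶜ).Connected := by
  obtain ⟨a, ha⟩ := hC.nonempty
  have reachable_of_mem : ∀ v (hv : v ∈ C),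
      (G.induce Dᶜ).Reachable ⟨v, hCD hv⟩ ⟨a, hCD ha⟩ := fun v hv =>
    (hC.preconnected ⟨v, hv⟩ ⟨a, ha⟩).map (SimpleGraph.induceHomOfLE G hCD).toHom
  have reachable_of_walk : ∀ {v c : V} (_ : G.Walk v c), c ∈ C → ∀ hv : v ∈ Dᶜ,
      (G.induce Dᶜ).Reachable ⟨v, hv⟩ ⟨a, hCD ha⟩ := by
    intro v c p hc
    induction p with
    | nil => exact fun _ => reachable_of_mem _ hc
    | @cons v u _ hvu _ ih =>
      intro hv
      by_cases hvC : v ∈ C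
      · exact reachable_of_mem v hvC
      · have hu : u ∈ Dᶜ := fun huD => hv (hD u huD v hvC hvu.symm)
        have hadj : (G.induce Dᶜ).Adj ⟨v, hv⟩ ⟨u, hu⟩ := hvu
        exact hadj.reachable.trans (ih hc hu)
  refine SimpleGraph.induce_connected_of_patches a (hCD ha) fun {v} hv => ?_
  obtain ⟨p⟩ := hG v a
  exact ⟨Dᶜ, subset_rfl, hCD ha, hv, (reachable_of_walk p ha hv).symm⟩

theorem exists_connected_edgeBoundary_subset (hG : G.Preconnected) {X : Set V}
    (hX : X.Nonempty) (hXc : Xᶜ.Nonempty) :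
    ∃ Z : Set V, (G.induce Z).Connected ∧ (G.induce Zᶜ).Connected ∧
      edgeBoundary G Z ⊆ edgeBoundary G X := by
  obtain ⟨a, ha⟩ := hX
  obtain ⟨b, hb⟩ := hXc
  obtain ⟨C, hCX, -, hC, hC_closed⟩ := exists_connected_adj_closed_subset (G := G) ha
  have hbC : b ∈ Cᶜ := fun h => hb (hCX h)
  obtain ⟨D, hDC, -, hD, hD_closed⟩ := exists_connected_adj_closed_subset (G := G) hbC
  refine ⟨Dᶜ, connected_induce_compl_of_adj_closed hG hC (Set.subset_compl_comm.1 hDC) hD_closed,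
    (compl_compl D).symm ▸ hD, ?_⟩
  rintro ⟨u, v⟩ ⟨huD, hvD, huv⟩
  rw [Set.notMem_compl_iff] at hvD
  have huC : u ∈ C := by
    by_contra h
    exact huD (hD_closed v hvD u h huv.symm)
  exact ⟨hCX huC, fun hvX => hDC hvD (hC_closed u huC v hvX huv), huv⟩

end ConnectedCut

theorem finsum_mem_le_finsum_mem_of_subset {ι M : Type*} [AddCommMonoid M] [PartialOrder M]
    [IsOrderedAddMonoid M] {f : ι → M} {s t : Set ι} (hst : s ⊆ t)
    (hfin : (t ∩ Function.support f).Finite) (hf : ∀ i ∈ t, 0 ≤ f i) :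
    ∑ᶠ i ∈ s, f i ≤ ∑ᶠ i ∈ t, f i := by
  rw [finsum_mem_eq_sum f hfin,
    finsum_mem_eq_sum f (hfin.subset (Set.inter_subset_inter_left _ hst))]
  refine Finset.sum_le_sum_of_subset_of_nonneg
    (Set.Finite.toFinset_mono (Set.inter_subset_inter_left _ hst)) fun i hi _ => hf i ?_
  exact ((Set.Finite.mem_toFinset hfin).1 hi).1

section CutWeight

variable {V M : Type*} {G : SimpleGraph V} [AddCommMonoid M] {w : V → V → M}

/-- The total weight of the edges leaving `X`. Only the values `w u v` with `u ∈ X` and `v ∉ X`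
count, so `w` may be asymmetric. The junk value is `0` when infinitely many of them are nonzero. -/
noncomputable def cutWeight (G : SimpleGraph V) (w : V → V → M) (X : Set V) : M :=
  ∑ᶠ p ∈ edgeBoundary G X, w p.1 p.2

theorem cutWeight_eq_finsum_mem [Finite V] (hw : ∀ u v, ¬ G.Adj u v → w u v = 0) (X : Set V) :
    cutWeight G w X = ∑ᶠ u ∈ X, ∑ᶠ v ∈ Xᶜ, w u v := by
  have boundary_to_product : cutWeight G w X = ∑ᶠ p ∈ X ×ˢ Xᶜ, w p.1 p.2 := by
    refine finsum_mem_inter_support_eq' _ _ _ fun p hp => ?_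
    have hadj : G.Adj p.1 p.2 := by
      by_contra h
      exact hp (hw _ _ h)
    simp only [edgeBoundary, Set.mem_ofPred_eq, Set.mem_prod, Set.mem_compl_iff, hadj, and_true]
  lift X to Finset V using X.toFinite
  classical
  have := Fintype.ofFinite V
  rw [boundary_to_product, ← Finset.coe_compl, ← Finset.coe_product]
  simp only [finsum_mem_coe_finset, Finset.sum_product]

theorem cutWeight_coe_finset [Fintype V] [DecidableEq V] (hw : ∀ u v, ¬ G.Adj u v → w u v = 0)
    (X : Finset V) : cutWeight G w X = ∑ u ∈ X, ∑ v ∈ Xᶜ, w u v := by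
  rw [cutWeight_eq_finsum_mem hw, ← Finset.coe_compl]
  simp only [finsum_mem_coe_finset]

theorem breakable_into_connected_pieces_general [PartialOrder M] [IsOrderedAddMonoid M]
    (hG : G.Preconnected) {X : Set V} (hX : X.Nonempty) (hXc : Xᶜ.Nonempty)
    (hfin : (edgeBoundary G X ∩ Function.support fun p : V × V => w p.1 p.2).Finite)
    (hw : ∀ p ∈ edgeBoundary G X, 0 ≤ w p.1 p.2) :
    ∃ Z : Set V, (G.induce Z).Connected ∧ (G.induce Zᶜ).Connected ∧
      edgeBoundary G Z ⊆ edgeBoundary G X ∧ cutWeight G w Z ≤ cutWeight G w X := by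
  obtain ⟨Z, hZ, hZc, hZX⟩ := exists_connected_edgeBoundary_subset hG hX hXc
  exact ⟨Z, hZ, hZc, hZX, finsum_mem_le_finsum_mem_of_subset hZX hfin hw⟩

end CutWeight

section InducedSubgraph

variable {V : Type*} {G : SimpleGraph V}

theorem connected_induce_image_val {s : Set V} {Z : Set s}
    (hZ : ((G.induce s).induce Z).Connected) : (G.induce (Subtype.val '' Z)).Connected := by
  let f : (G.induce s).induce Z →g G.induce (Subtype.val '' Z) :=
    ⟨fun z => ⟨z.1.1, z.1, z.2, rfl⟩, id⟩
  refine hZ.map f ?_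
  rintro ⟨_, z, hz, rfl⟩
  exact ⟨⟨z, hz⟩, rfl⟩

theorem preconnected_induce_iff_reflTransGen {s : Set V} :
    (G.induce s).Preconnected ↔ ∀ u ∈ s, ∀ v ∈ s,
      Relation.ReflTransGen (fun x y => x ∈ s ∧ y ∈ s ∧ G.Adj x y) u v := by
  refine ⟨fun h u hu v hv => ?_, fun h => ?_⟩
  · exact ((SimpleGraph.reachable_iff_reflTransGen _ _).1 (h ⟨u, hu⟩ ⟨v, hv⟩)).lift Subtype.val
      fun x y hxy => ⟨x.2, y.2, hxy⟩
  · rintro ⟨u, hu⟩ ⟨v, hv⟩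
    have path := h u hu v hv
    induction path with
    | refl => exact .refl _
    | @tail x y _ hxy ih =>
      have hadj : (G.induce s).Adj ⟨x, hxy.1⟩ ⟨y, hv⟩ := hxy.2.2
      exact (ih hxy.1).trans hadj.reachable

end InducedSubgraph

namespace TA

variable {S : Type} {Γ : System S} {α β γ : PosAsm S}

/-- The square lattice `ℤ²` as a graph. -/
def gridGraph : SimpleGraph (ℤ × ℤ) where
  Adj := gridAdj
  symm := ⟨fun u v h => by
    simp only [gridAdj, Finset.mem_insert, Finset.mem_singleton, Prod.ext_iff, Prod.fst_sub,
      Prod.snd_sub] at h ⊢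
    omega⟩
  loopless := ⟨fun u => by rw [gridAdj, sub_self]; decide⟩

/-- The graph of adjacent tiles of an assembly. It contains the bond graph and has in addition the
adjacencies of affinity `0`. -/
abbrev tileGraph (γ : PosAsm S) : SimpleGraph (dom γ) := gridGraph.induce (dom γ)

theorem isConnected_iff_preconnected_tileGraph : IsConnected γ ↔ (tileGraph γ).Preconnected :=
  (preconnected_induce_iff_reflTransGen (G := gridGraph)).symm

theorem edgeW_eq_zero_of_not_gridAdj {u v : ℤ × ℤ} (h : ¬ gridAdj u v) : edgeW Γ γ u v = 0 := by
  simp only [gridAdj, Finset.mem_insert, Finset.mem_singleton, Prod.ext_iff, Prod.fst_sub,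
    Prod.snd_sub] at h
  unfold edgeW
  split
  · simp only [Prod.ext_iff, Prod.fst_add, Prod.snd_add]
    split_ifs <;> first | rfl | omega
  · rfl

theorem crossW_image_compl (X : Set (dom γ)) :
    crossW Γ γ (Subtype.val '' X) (Subtype.val '' Xᶜ) =
      cutWeight (tileGraph γ) (fun u v => edgeW Γ γ u v) X := by
  have : Finite (dom γ) := γ.finite
  rw [cutWeight_eq_finsum_mem fun u v h => edgeW_eq_zero_of_not_gridAdj h]
  simp only [crossW, finsum_mem_image Subtype.val_injective.injOn]

theorem dom_union : dom (union α β) = dom α ∪ dom β := by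
  ext x
  simp only [dom, union, Set.mem_ofPred_eq, Set.mem_union]
  cases α.tiles x <;> simp

theorem BreaksInto.exists_dom_eq_image (h : BreaksInto Γ γ α β) :
    ∃ X : Set (dom γ), dom α = Subtype.val '' X ∧ dom β = Subtype.val '' Xᶜ := by
  obtain ⟨hdisj, rfl, -⟩ := h
  refine ⟨Subtype.val ⁻¹' dom α, ?_, ?_⟩
  · rw [Subtype.image_preimage_coe, dom_union, Set.union_inter_cancel_left]
  · rw [← Set.preimage_compl, Subtype.image_preimage_coe, dom_union, ← Set.sdiff_eq,
      Set.union_sdiff_cancel_left hdisj.le_bot]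

open Classical in
/-- The part of an assembly on a set of positions. -/
noncomputable def restrict (γ : PosAsm S) (A : Set (ℤ × ℤ)) : PosAsm S where
  tiles x := if x ∈ A then γ.tiles x else none
  finite := γ.finite.subset fun x hx hγ => hx (by simp only [hγ, ite_self])

theorem dom_restrict (A : Set (ℤ × ℤ)) : dom (restrict γ A) = dom γ ∩ A := by
  ext x
  simp [dom, restrict, and_comm]

theorem union_restrict {A B : Set (ℤ × ℤ)} (h : dom γ ⊆ A ∪ B) :
    union (restrict γ A) (restrict γ B) = γ := by
  cases γ with | mk tiles _ =>
  simp only [union, restrict, PosAsm.mk.injEq]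
  funext x
  cases hx : tiles x with
  | none => simp only [ite_self]
  | some s =>
    have hAB : x ∈ A ∨ x ∈ B := h (by simp [dom, hx])
    by_cases hA : x ∈ A
    · simp only [hA, if_true]
    · simp only [hA, hAB.resolve_left hA, if_true, if_false]

theorem dom_restrict_image (Z : Set (dom γ)) :
    dom (restrict γ (Subtype.val '' Z)) = Subtype.val '' Z := by
  rw [dom_restrict, Set.inter_eq_right]
  exact Subtype.coe_image_subset _ _

theorem breaksInto_restrict {Z : Set (dom γ)} (hZ : Z.Nonempty) (hZc : Zᶜ.Nonempty)
    (hcut : crossW Γ γ (Subtype.val '' Z) (Subtype.val '' Zᶜ) < Γ.τ) :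
    BreaksInto Γ γ (restrict γ (Subtype.val '' Z)) (restrict γ (Subtype.val '' Zᶜ)) := by
  have hcover : dom γ ⊆ Subtype.val '' Z ∪ Subtype.val '' Zᶜ := by
    rw [← Set.image_union, Set.union_compl_self, Set.image_univ, Subtype.range_coe]
  refine ⟨?_, (union_restrict hcover).symm, ?_⟩ <;> simp only [dom_restrict_image]
  · exact (Set.disjoint_image_iff Subtype.val_injective).2 disjoint_compl_right
  · exact ⟨hZ.image _, hZc.image _, hcut⟩

theorem isConnected_restrict_image {Z : Set (dom γ)} (hZ : ((tileGraph γ).induce Z).Connected) :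
    IsConnected (restrict γ (Subtype.val '' Z)) := by
  rw [isConnected_iff_preconnected_tileGraph, tileGraph, dom_restrict_image]
  exact (connected_induce_image_val hZ).preconnected

theorem BreaksInto.exists_isConnected (hγ : IsConnected γ) (h : BreaksInto Γ γ α β) :
    ∃ α' β' : PosAsm S, BreaksInto Γ γ α' β' ∧ IsConnected α' ∧ IsConnected β' := by
  have : Finite (dom γ) := γ.finite
  obtain ⟨X, hαX, hβX⟩ := h.exists_dom_eq_image
  obtain ⟨-, -, hα, hβ, hcut⟩ := h
  rw [hαX, Set.image_nonempty] at hα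
  rw [hβX, Set.image_nonempty] at hβ
  rw [hαX, hβX, crossW_image_compl] at hcut
  have hG : (tileGraph γ).Preconnected := isConnected_iff_preconnected_tileGraph.1 hγ
  obtain ⟨Z, hZ, hZc, -, hle⟩ := breakable_into_connected_pieces_general
    (w := fun u v : dom γ => edgeW Γ γ u v) hG hα hβ (Set.toFinite _) fun _ _ => Nat.zero_le _
  refine ⟨_, _, breaksInto_restrict ?_ ?_ ?_, isConnected_restrict_image hZ,
    isConnected_restrict_image hZc⟩
  · exact Set.nonempty_coe_sort.1 hZ.nonempty
  · exact Set.nonempty_coe_sort.1 hZc.nonempty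
  · exact crossW_image_compl Z ▸ hle.trans_lt hcut

end TA

theorem breakable_into_connected_pieces :
    BreakIntoConnectedPiecesGraphClaim ∧ BreakIntoConnectedPiecesTAClaim := by
  refine ⟨?_, fun S Γ _ γ hγ ⟨α, β, hbreak⟩ => hbreak.exists_isConnected hγ⟩
  intro V _ _ G w τ _ hG _ hw ⟨X, hX, hXc, hcut⟩
  obtain ⟨Z, hZ, hZc, -, hle⟩ := breakable_into_connected_pieces_general (w := w)
    (X := X) hG.preconnected hX (mod_cast hXc) (Set.toFinite _) fun _ _ => Nat.zero_le _
  lift Z to Finset V using Z.toFinite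
  rw [cutWeight_coe_finset hw, cutWeight_coe_finset hw] at hle
  rw [← Finset.coe_compl] at hZc
  exact ⟨Z, Set.nonempty_coe_sort.1 hZ.nonempty, Set.nonempty_coe_sort.1 hZc.nonempty,
    hle.trans_lt hcut, hZ, hZc⟩
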